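/- arXiv:math/0508360 — 6 statements merged into one kernel-verified Lean document; each statement's English description precedes it below -/
import Mathlib

section
/- Let E and F be real normed vector spaces and let N ≥ 2. For i = 0,…,N−1 let Sⁱ : E × F × E → ℝ be Fréchet differentiable, and let ιⁱ : E × E → F be Fréchet differentiable with D₂Sⁱ(q₀, ιⁱ(q₀,q₁), q₁) = 0 for all (q₀,q₁); define L_dⁱ(q₀,q₁) = Sⁱ(q₀, ιⁱ(q₀,q₁), q₁). Suppose q₀,…,q_N ∈ E and continuous linear functionals λ₀,…,λ_{N−2} ∈ E* satisfy, for each i, the Karush–Kuhn–Tucker stationarity conditions of the continuity-augmented discrete action ∑ᵢ Sⁱ − ∑ᵢ λᵢ(qᵢ¹ − q_{i+1}⁰): namely D₃Sⁱ(qᵢ, ιⁱ(qᵢ,q_{i+1}), q_{i+1}) = λᵢ for i = 0,…,N−2 and D₁S^{i+1}(q_{i+1}, ι^{i+1}(q_{i+1},q_{i+2}), q_{i+2}) = −λᵢ for i = 0,…,N−2. Then the nodal values satisfy the discrete Euler–Lagrange equations: D₂L_dⁱ(qᵢ, q_{i+1}) + D₁L_d^{i+1}(q_{i+1}, q_{i+2})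 = 0 for i = 0,…,N−2. -/
theorem envelope_aux {E F : Type*} [NormedAddCommGroup E] [NormedSpace ℝ E]
    [NormedAddCommGroup F] [NormedSpace ℝ F] (f : F × E → ℝ) (hf : Differentiable ℝ f)
    (g : E → F) (hg : Differentiable ℝ g) (a : E)
    (h0 : fderiv ℝ (fun y => f (y, a)) (g a) = 0) :
    fderiv ℝ (fun x => f (g x, x)) a = fderiv ℝ (fun x => f (g a, x)) a := by
  have hD := (hf (g a, a)).hasFDerivAt
  have h1 := HasFDerivAt.comp (f := fun x => (g x, x)) a hD
    ((hg a).hasFDerivAt.prodMk (hasFDerivAt_id a))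
  have h2 := HasFDerivAt.comp (f := fun x => (g a, x)) a hD
    ((hasFDerivAt_const (g a) a).prodMk (hasFDerivAt_id a))
  have h3 := HasFDerivAt.comp (f := fun y => (y, a)) (g a) hD
    ((hasFDerivAt_id (g a)).prodMk (hasFDerivAt_const a (g a)))
  have h3' := h3.fderiv.symm.trans h0
  refine h1.fderiv.trans (Eq.trans ?_ h2.fderiv.symm)
  ext v
  have h4 := DFunLike.congr_fun h3' (fderiv ℝ g a v)
  have h5 : ((fderiv ℝ g a v, v) : F × E) = (fderiv ℝ g a v, 0) + (0, v) := by simp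
  simp only [ContinuousLinearMap.comp_apply, ContinuousLinearMap.prod_apply,
    ContinuousLinearMap.zero_apply, ContinuousLinearMap.id_apply] at h4 ⊢
  rw [h5, map_add, h4, zero_add]

/-- The Karush–Kuhn–Tucker stationarity conditions of the continuity-augmented discrete
action imply the discrete Euler–Lagrange equations for the discrete Lagrangians
`L_dⁱ (q₀, q₁) = Sⁱ (q₀, ιⁱ (q₀, q₁), q₁)`. -/
theorem kkt_implies_discrete_euler_lagrange
    {E F : Type*} [NormedAddCommGroup E] [NormedSpace ℝ E]
    [NormedAddCommGroup F] [NormedSpace ℝ F]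
    (N : ℕ) (hN : 2 ≤ N)
    (S : ℕ → E × F × E → ℝ) (hS : ∀ i, i < N → Differentiable ℝ (S i))
    (ι : ℕ → E × E → F) (hι : ∀ i, i < N → Differentiable ℝ (ι i))
    (hcrit : ∀ i, i < N → ∀ q₀ q₁ : E,
      fderiv ℝ (fun y => S i (q₀, y, q₁)) (ι i (q₀, q₁)) = 0)
    (q : ℕ → E) (lam : ℕ → E →L[ℝ] ℝ)
    (hKKT₁ : ∀ i, i + 2 ≤ N →
      fderiv ℝ (fun x => S i (q i, ι i (q i, q (i + 1)), x)) (q (i + 1)) = lam i)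
    (hKKT₂ : ∀ i, i + 2 ≤ N →
      fderiv ℝ (fun x => S (i + 1) (x, ι (i + 1) (q (i + 1), q (i + 2)), q (i + 2)))
        (q (i + 1)) = -lam i) :
    ∀ i, i + 2 ≤ N →
      fderiv ℝ (fun x => S i (q i, ι i (q i, x), x)) (q (i + 1))
        + fderiv ℝ (fun x => S (i + 1) (x, ι (i + 1) (x, q (i + 2)), q (i + 2)))
            (q (i + 1)) = 0 := by
  intro i hi
  have hSi := hS i (by omega)
  have hSj := hS (i + 1) (by omega)
  have hιi := hι i (by omega)
  have hιj := hι (i + 1) (by omega)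
  have e1 := envelope_aux (fun p : F × E => S i (q i, p.1, p.2)) (by fun_prop)
    (fun x => ι i (q i, x)) (by fun_prop) (q (i + 1)) (hcrit i (by omega) _ _)
  have e2 := envelope_aux (fun p : F × E => S (i + 1) (p.2, p.1, q (i + 2))) (by fun_prop)
    (fun x => ι (i + 1) (x, q (i + 2))) (by fun_prop) (q (i + 1)) (hcrit (i + 1) (by omega) _ _)
  have k1 := e1.trans (hKKT₁ i hi)
  have k2 := e2.trans (hKKT₂ i hi)
  simp only at k1 k2
  rw [k1, k2, add_neg_cancel]
end

section
/- Let E be a real normed vector space, let L_d : E × E → ℝ be Fréchet differentiable, let n ≥ 2, and define the discrete action sum S_d : E^{n+1} → ℝ by S_d(q₀,…,q_n) = ∑_{i=0}^{n−1} L_d(qᵢ, q_{i+1}). Then for each interior index 1 ≤ i ≤ n−1, the Fréchet partial derivative of S_d with respect to qᵢ equals D₂L_d(q_{i−1}, qᵢ) + D₁L_d(qᵢ, q_{i+1}). Consequently, (q₀,…,q_n) is a critical point of S_d with respect to all variations that fix the endpoints q₀ and q_n if and only if the discrete Euler–Lagrange equations D₂L_d(q_{i−1}, qᵢ) + D₁L_d(qᵢ,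 q_{i+1}) = 0 hold for all i = 1,…,n−1. -/
/-- For the discrete action sum `S_d (q₀, …, q_n) = ∑_{i=0}^{n-1} L_d (qᵢ, q_{i+1})`, the
partial derivative with respect to an interior point `qᵢ` equals
`D₂L_d (q_{i-1}, qᵢ) + D₁L_d (qᵢ, q_{i+1})`; consequently the discrete action sum is
stationary with respect to all variations fixing the endpoints if and only if the discrete
Euler–Lagrange equations hold at every interior index. -/
theorem discrete_euler_lagrange_characterization
    {E : Type*} [NormedAddCommGroup E] [NormedSpace ℝ E]
    (Ld : E × E → ℝ) (hLd : Differentiable ℝ Ld)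
    (n : ℕ) (hn : 2 ≤ n) (q : ℕ → E) :
    (∀ i, 1 ≤ i → i ≤ n - 1 →
      fderiv ℝ (fun x => ∑ j ∈ Finset.range n,
          Ld (Function.update q i x j, Function.update q i x (j + 1))) (q i)
        = fderiv ℝ (fun x => Ld (q (i - 1), x)) (q i)
          + fderiv ℝ (fun x => Ld (x, q (i + 1))) (q i)) ∧
    ((∀ δ : ℕ → E, δ 0 = 0 → δ n = 0 →
        deriv (fun ε : ℝ => ∑ j ∈ Finset.range n,
          Ld (q j + ε • δ j, q (j + 1) + ε • δ (j + 1))) 0 = 0) ↔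
      (∀ i, 1 ≤ i → i ≤ n - 1 →
        fderiv ℝ (fun x => Ld (q (i - 1), x)) (q i)
          + fderiv ℝ (fun x => Ld (x, q (i + 1))) (q i) = 0)) := by
  obtain ⟨m, rfl⟩ : ∃ m, n = m + 1 := ⟨n - 1, by omega⟩
  set A : ℕ → E →L[ℝ] ℝ := fun j => fderiv ℝ (fun x => Ld (x, q (j + 1))) (q j) with hA
  set B : ℕ → E →L[ℝ] ℝ := fun j => fderiv ℝ (fun x => Ld (q j, x)) (q (j + 1)) with hB
  have hA' : ∀ j, HasFDerivAt (fun x => Ld (x, q (j + 1))) (A j) (q j) := fun j =>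
    DifferentiableAt.hasFDerivAt (by fun_prop)
  have hB' : ∀ j, HasFDerivAt (fun x => Ld (q j, x)) (B j) (q (j + 1)) := fun j =>
    DifferentiableAt.hasFDerivAt (by fun_prop)
  have hAB : ∀ j u v, fderiv ℝ Ld (q j, q (j + 1)) (u, v) = A j u + B j v := by
    intro j u v
    have hL := (hLd (q j, q (j + 1))).hasFDerivAt
    have h1 := (hA' j).unique
      (hL.comp (q j) ((hasFDerivAt_id (𝕜 := ℝ) (q j)).prodMk (hasFDerivAt_const (q (j + 1)) (q j))))
    have h2 := (hB' j).unique
      (hL.comp (q (j + 1)) ((hasFDerivAt_const (𝕜 := ℝ) (q j) (q (j + 1))).prodMk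
        (hasFDerivAt_id (q (j + 1)))))
    rw [h1, h2]
    simp [← map_add]
  constructor
  · intro i h1 h2
    obtain ⟨k, rfl⟩ : ∃ k, i = k + 1 := ⟨i - 1, by omega⟩
    have key : ∀ j ∈ Finset.range (m + 1), HasFDerivAt (fun x =>
        Ld (Function.update q (k + 1) x j, Function.update q (k + 1) x (j + 1)))
        ((if j = k + 1 then A j else 0) + (if j = k then B j else 0)) (q (k + 1)) := by
      intro j _
      by_cases e1 : j = k + 1
      · subst e1
        simpa using hA' (k + 1)
      · by_cases e2 : j = k
        · subst e2
          simpa using hB' j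
        · simpa [Function.update_of_ne, e1, e2] using
            hasFDerivAt_const (𝕜 := ℝ) (Ld (q j, q (j + 1))) (q (k + 1))
    have hs := (HasFDerivAt.fun_sum key).fderiv
    rw [hs, Finset.sum_add_distrib, Finset.sum_ite_eq', Finset.sum_ite_eq',
      if_pos (by simp; omega), if_pos (by simp; omega), add_comm]
    rfl
  · have hd : ∀ δ : ℕ → E, δ 0 = 0 → δ (m + 1) = 0 →
        deriv (fun ε : ℝ => ∑ j ∈ Finset.range (m + 1),
          Ld (q j + ε • δ j, q (j + 1) + ε • δ (j + 1))) 0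
          = ∑ j ∈ Finset.range m, (B j + A (j + 1)) (δ (j + 1)) := by
      intro δ h0 hm
      have key : ∀ j ∈ Finset.range (m + 1), HasDerivAt (fun ε : ℝ =>
          Ld (q j + ε • δ j, q (j + 1) + ε • δ (j + 1))) (A j (δ j) + B j (δ (j + 1))) 0 := by
        intro j _
        have hl : ∀ a b : E, HasDerivAt (fun ε : ℝ => a + ε • b) b 0 := by
          intro a b
          simpa using ((hasDerivAt_id (0 : ℝ)).smul_const b).const_add a
        have hL : HasFDerivAt Ld (fderiv ℝ Ld (q j, q (j + 1)))
            (q j + (0 : ℝ) • δ j, q (j + 1) + (0 : ℝ) • δ (j + 1)) := by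
          simpa using (hLd (q j, q (j + 1))).hasFDerivAt
        rw [← hAB]
        exact hL.comp_hasDerivAt (0 : ℝ) ((hl (q j) (δ j)).prodMk (hl (q (j + 1)) (δ (j + 1))))
      rw [(HasDerivAt.fun_sum key).deriv, Finset.sum_add_distrib, Finset.sum_range_succ',
        Finset.sum_range_succ (fun j => B j (δ (j + 1))), h0, hm]
      simp [Finset.sum_add_distrib, add_comm]
    constructor
    · intro h i h1 h2
      obtain ⟨k, rfl⟩ : ∃ k, i = k + 1 := ⟨i - 1, by omega⟩
      change B k + A (k + 1) = 0
      ext v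
      have hz := h (Function.update 0 (k + 1) v) (by simp [Function.update_of_ne])
        (by rw [Function.update_of_ne (by omega)]; rfl)
      rw [hd _ (by simp [Function.update_of_ne])
        (by rw [Function.update_of_ne (by omega)]; rfl),
        Finset.sum_eq_single k] at hz
      · simpa using hz
      · intro j _ hj
        rw [Function.update_of_ne (by omega)]
        simp
      · intro hk
        exact absurd (Finset.mem_range.2 (by omega)) hk
    · intro h δ h0 hm
      rw [hd δ h0 hm]
      refine Finset.sum_eq_zero fun j hj => ?_
      have hz : B j + A (j + 1) = 0 :=
        h (j + 1) (by omega) (by have := Finset.mem_range.1 hj; omega)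
      rw [hz]
      rfl
end

section
/- Let E be a real normed vector space, let L_d : E⁴ → ℝ be Fréchet differentiable, let M, N ≥ 2, and let q : {0,…,M} × {0,…,N} → E be a grid of field values. Define the discrete action S_d = ∑_{i=0}^{M−1} ∑_{j=0}^{N−1} L_d(q_{i,j}, q_{i+1,j}, q_{i,j+1}, q_{i+1,j+1}). Then for each interior grid point (i,j) with 1 ≤ i ≤ M−1 and 1 ≤ j ≤ N−1, the Fréchet partial derivative of S_d with respect to q_{i,j} equals D₁L_d(q_{i,j}, q_{i+1,j}, q_{i,j+1}, q_{i+1,j+1}) + D₂L_d(q_{i−1,j}, q_{i,j}, q_{i−1,j+1}, q_{i,j+1}) + D₃L_d(q_{i,j−1}, q_{i+1,j−1}, q_{i,j}, q_{i+1,j}) + D₄L_d(q_{i−1,j−1}, q_{i,j−1}, q_{i−1,j}, q_{i,j}). Consequently, S_d is stationary with respect to variations of all interior grid values if and only if this four-term discrete Euler–Lagrange equation equals zero at every interior grid point. -/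
theorem aux_sum_two {A : Type*} [AddCommMonoid A] (f : ℕ → A) (M k : ℕ) (hk : k + 1 < M)
    (h : ∀ a, a ≠ k → a ≠ k + 1 → f a = 0) :
    ∑ a ∈ Finset.range M, f a = f k + f (k + 1) := by
  have hs : ({k, k + 1} : Finset ℕ) ⊆ Finset.range M := by
    intro a ha
    simp only [Finset.mem_insert, Finset.mem_singleton] at ha
    rw [Finset.mem_range]
    omega
  rw [← Finset.sum_subset hs, Finset.sum_pair (by omega)]
  intro a _ ha
  simp only [Finset.mem_insert, Finset.mem_singleton, not_or] at ha
  exact h a ha.1 ha.2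

theorem aux_update_diff {E : Type*} [NormedAddCommGroup E] [NormedSpace ℝ E]
    (q : ℕ × ℕ → E) (p r : ℕ × ℕ) :
    Differentiable ℝ (fun x => Function.update q p x r) := by
  by_cases h : r = p
  · subst h
    simp only [Function.update_self]
    exact differentiable_id
  · simp only [Function.update_of_ne h]
    exact differentiable_const _

theorem aux_main {E : Type*} [NormedAddCommGroup E] [NormedSpace ℝ E]
    (Ld : E × E × E × E → ℝ) (hLd : Differentiable ℝ Ld)
    (M N : ℕ) (q : ℕ × ℕ → E) (k l : ℕ) (hk : k + 1 < M) (hl : l + 1 < N) :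
      fderiv ℝ (fun x => ∑ a ∈ Finset.range M, ∑ b ∈ Finset.range N,
          Ld (Function.update q (k + 1, l + 1) x (a, b),
              Function.update q (k + 1, l + 1) x (a + 1, b),
              Function.update q (k + 1, l + 1) x (a, b + 1),
              Function.update q (k + 1, l + 1) x (a + 1, b + 1))) (q (k + 1, l + 1))
        = fderiv ℝ (fun x => Ld (x, q (k + 1 + 1, l + 1), q (k + 1, l + 1 + 1),
              q (k + 1 + 1, l + 1 + 1))) (q (k + 1, l + 1))
          + fderiv ℝ (fun x => Ld (q (k, l + 1), x, q (k, l + 1 + 1),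
              q (k + 1, l + 1 + 1))) (q (k + 1, l + 1))
          + fderiv ℝ (fun x => Ld (q (k + 1, l), q (k + 1 + 1, l), x,
              q (k + 1 + 1, l + 1))) (q (k + 1, l + 1))
          + fderiv ℝ (fun x => Ld (q (k, l), q (k + 1, l), q (k, l + 1), x))
              (q (k + 1, l + 1)) := by
  have hd : ∀ a b : ℕ, Differentiable ℝ (fun x =>
      Ld (Function.update q (k + 1, l + 1) x (a, b),
              Function.update q (k + 1, l + 1) x (a + 1, b),
              Function.update q (k + 1, l + 1) x (a, b + 1),
              Function.update q (k + 1, l + 1) x (a + 1, b + 1))) := fun a b =>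
    hLd.comp ((aux_update_diff q _ _).prodMk ((aux_update_diff q _ _).prodMk
      ((aux_update_diff q _ _).prodMk (aux_update_diff q _ _))))
  have hz : ∀ a b : ℕ, ((a ≠ k ∧ a ≠ k + 1) ∨ (b ≠ l ∧ b ≠ l + 1)) → fderiv ℝ (fun x =>
      Ld (Function.update q (k + 1, l + 1) x (a, b),
              Function.update q (k + 1, l + 1) x (a + 1, b),
              Function.update q (k + 1, l + 1) x (a, b + 1),
              Function.update q (k + 1, l + 1) x (a + 1, b + 1))) (q (k + 1, l + 1)) = 0 := by
    intro a b h
    have e1 : (a, b) ≠ (k + 1, l + 1) := by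
      rw [Ne, Prod.mk.injEq]; omega
    have e2 : (a + 1, b) ≠ (k + 1, l + 1) := by
      rw [Ne, Prod.mk.injEq]; omega
    have e3 : (a, b + 1) ≠ (k + 1, l + 1) := by
      rw [Ne, Prod.mk.injEq]; omega
    have e4 : (a + 1, b + 1) ≠ (k + 1, l + 1) := by
      rw [Ne, Prod.mk.injEq]; omega
    simp only [Function.update_of_ne e1, Function.update_of_ne e2, Function.update_of_ne e3,
      Function.update_of_ne e4, fderiv_fun_const, Pi.zero_apply]
  rw [fderiv_fun_sum (fun a _ => (Differentiable.fun_sum (fun b _ => hd a b)) _)]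
  simp_rw [fderiv_fun_sum (fun b _ => hd _ b _)]
  rw [aux_sum_two _ M k hk (fun a h1 h2 => Finset.sum_eq_zero (fun b _ => hz a b (Or.inl ⟨h1, h2⟩))),
    aux_sum_two _ N l hl (fun b h1 h2 => hz k b (Or.inr ⟨h1, h2⟩)),
    aux_sum_two _ N l hl (fun b h1 h2 => hz (k + 1) b (Or.inr ⟨h1, h2⟩))]
  simp
  abel

/-- For the multisymplectic discrete action
`S_d = ∑_{i<M} ∑_{j<N} L_d (q_{i,j}, q_{i+1,j}, q_{i,j+1}, q_{i+1,j+1})`, the partial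
derivative with respect to an interior grid value `q_{i,j}` is the four-term expression
`D₁L_d + D₂L_d + D₃L_d + D₄L_d` of the context; consequently `S_d` is stationary with
respect to variations of all interior grid values if and only if the four-term discrete
Euler–Lagrange equation holds at every interior grid point. -/
theorem multisymplectic_discrete_euler_lagrange
    {E : Type*} [NormedAddCommGroup E] [NormedSpace ℝ E]
    (Ld : E × E × E × E → ℝ) (hLd : Differentiable ℝ Ld)
    (M N : ℕ) (hM : 2 ≤ M) (hN : 2 ≤ N) (q : ℕ × ℕ → E) :
    (∀ i j, 1 ≤ i → i ≤ M - 1 → 1 ≤ j → j ≤ N - 1 →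
      fderiv ℝ (fun x => ∑ a ∈ Finset.range M, ∑ b ∈ Finset.range N,
          Ld (Function.update q (i, j) x (a, b),
              Function.update q (i, j) x (a + 1, b),
              Function.update q (i, j) x (a, b + 1),
              Function.update q (i, j) x (a + 1, b + 1))) (q (i, j))
        = fderiv ℝ (fun x => Ld (x, q (i + 1, j), q (i, j + 1), q (i + 1, j + 1))) (q (i, j))
          + fderiv ℝ (fun x => Ld (q (i - 1, j), x, q (i - 1, j + 1), q (i, j + 1))) (q (i, j))
          + fderiv ℝ (fun x => Ld (q (i, j - 1), q (i + 1, j - 1), x, q (i + 1, j))) (q (i, j))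
          + fderiv ℝ (fun x => Ld (q (i - 1, j - 1), q (i, j - 1), q (i - 1, j), x)) (q (i, j))) ∧
    ((∀ i j, 1 ≤ i → i ≤ M - 1 → 1 ≤ j → j ≤ N - 1 →
        fderiv ℝ (fun x => ∑ a ∈ Finset.range M, ∑ b ∈ Finset.range N,
            Ld (Function.update q (i, j) x (a, b),
                Function.update q (i, j) x (a + 1, b),
                Function.update q (i, j) x (a, b + 1),
                Function.update q (i, j) x (a + 1, b + 1))) (q (i, j)) = 0) ↔
      (∀ i j, 1 ≤ i → i ≤ M - 1 → 1 ≤ j → j ≤ N - 1 →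
        fderiv ℝ (fun x => Ld (x, q (i + 1, j), q (i, j + 1), q (i + 1, j + 1))) (q (i, j))
          + fderiv ℝ (fun x => Ld (q (i - 1, j), x, q (i - 1, j + 1), q (i, j + 1))) (q (i, j))
          + fderiv ℝ (fun x => Ld (q (i, j - 1), q (i + 1, j - 1), x, q (i + 1, j))) (q (i, j))
          + fderiv ℝ (fun x => Ld (q (i - 1, j - 1), q (i, j - 1), q (i - 1, j), x)) (q (i, j))
          = 0)) := by
  refine (fun key => ⟨key, ?_⟩) ?_
  rotate_left
  · constructor
    · intro h i j h1 h2 h3 h4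
      rw [← key i j h1 h2 h3 h4]
      exact h i j h1 h2 h3 h4
    · intro h i j h1 h2 h3 h4
      rw [key i j h1 h2 h3 h4]
      exact h i j h1 h2 h3 h4
  · intro i j h1 h2 h3 h4
    obtain ⟨k, rfl⟩ : ∃ k, i = k + 1 := ⟨i - 1, by omega⟩
    obtain ⟨l, rfl⟩ : ∃ l, j = l + 1 := ⟨j - 1, by omega⟩
    exact aux_main Ld hLd M N q k l (by omega) (by omega)
end

section
/- Let E be a real normed vector space and L : E × E → ℝ a C¹ Lagrangian. For q₀, q₁ ∈ E and h > 0 define the midpoint discrete Lagrangian L_d(q₀,q₁,h) = h·L((q₀+q₁)/2, (q₁−q₀)/h). Let N ≥ 3, let q₀,…,q_N ∈ E, h₀,…,h_{N−1} > 0, λ₀,…,λ_{N−2} ∈ E*, and ω₀,…,ω_{N−2} ∈ ℝ, and write mᵢ = (qᵢ+q_{i+1})/2 and vᵢ = (q_{i+1}−qᵢ)/hᵢ. Suppose the variational (Karush–Kuhn–Tucker) equations hold: (i) 0 = L(mᵢ,vᵢ) − D₂L(mᵢ,vᵢ)[vᵢ] − ωᵢ for i = 0,…,N−2; (ii) 0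 = −L(mᵢ,vᵢ) + D₂L(mᵢ,vᵢ)[vᵢ] + ω_{i−1} for i = 1,…,N−1; (iii) 0 = hᵢ·[(1/2)·D₁L(mᵢ,vᵢ) + (1/hᵢ)·D₂L(mᵢ,vᵢ)] − λᵢ for i = 0,…,N−2; (iv) 0 = hᵢ·[(1/2)·D₁L(mᵢ,vᵢ) − (1/hᵢ)·D₂L(mᵢ,vᵢ)] + λ_{i−1} for i = 1,…,N−1. Define the discrete energy E_d(qᵢ,q_{i+1},hᵢ) = −L(mᵢ,vᵢ) + D₂L(mᵢ,vᵢ)[vᵢ]. Then after eliminating the multipliers one obtains, for all admissible i: conservation of discrete energy, E_d(qᵢ, q_{i+1}, hᵢ) = E_d(q_{i+1}, q_{i+2}, h_{i+1}), and the discrete Euler–Lagrange equation, D₂L_d(qᵢ, q_{i+1}, hᵢ) + D₁L_d(q_{i+1}, q_{i+2}, h_{i+1}) = 0. -/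
/-- The midpoint discrete Lagrangian `L_d (q₀, q₁, h) = h · L ((q₀+q₁)/2, (q₁−q₀)/h)`. -/
noncomputable def midpointLd {E : Type*} [NormedAddCommGroup E] [NormedSpace ℝ E]
    (L : E × E → ℝ) (a b : E) (t : ℝ) : ℝ :=
  t * L (((1 : ℝ) / 2) • (a + b), t⁻¹ • (b - a))

/-- The midpoint `mᵢ = (qᵢ + q_{i+1})/2`. -/
noncomputable def midpt {E : Type*} [NormedAddCommGroup E] [NormedSpace ℝ E]
    (q : ℕ → E) (i : ℕ) : E :=
  ((1 : ℝ) / 2) • (q i + q (i + 1))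

/-- The discrete velocity `vᵢ = (q_{i+1} − qᵢ)/hᵢ`. -/
noncomputable def discVel {E : Type*} [NormedAddCommGroup E] [NormedSpace ℝ E]
    (q : ℕ → E) (h : ℕ → ℝ) (i : ℕ) : E :=
  (h i)⁻¹ • (q (i + 1) - q i)

/-- The discrete energy `E_d (qᵢ, q_{i+1}, hᵢ) = −L(mᵢ, vᵢ) + D₂L(mᵢ, vᵢ)[vᵢ]`. -/
noncomputable def discEnergy {E : Type*} [NormedAddCommGroup E] [NormedSpace ℝ E]
    (L : E × E → ℝ) (q : ℕ → E) (h : ℕ → ℝ) (i : ℕ) : ℝ :=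
  -L (midpt q i, discVel q h i)
    + (fderiv ℝ (fun w => L (midpt q i, w)) (discVel q h i)) (discVel q h i)

theorem aux_partials {E : Type*} [NormedAddCommGroup E] [NormedSpace ℝ E]
    (L : E × E → ℝ) (hL : ContDiff ℝ 1 L) (m v : E) :
    fderiv ℝ (fun x => L (x, v)) m
        = (fderiv ℝ L (m, v)).comp (ContinuousLinearMap.inl ℝ E E) ∧
      fderiv ℝ (fun w => L (m, w)) v
        = (fderiv ℝ L (m, v)).comp (ContinuousLinearMap.inr ℝ E E) := by
  have hd : HasFDerivAt L (fderiv ℝ L (m, v)) (m, v) :=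
    ((hL.differentiable (by norm_num)) (m, v)).hasFDerivAt
  exact ⟨(hd.comp m (hasFDerivAt_prodMk_left m v)).fderiv,
    (hd.comp v (hasFDerivAt_prodMk_right m v)).fderiv⟩

theorem aux_Ld {E : Type*} [NormedAddCommGroup E] [NormedSpace ℝ E]
    (L : E × E → ℝ) (hL : ContDiff ℝ 1 L) (a b : E) (t : ℝ) :
    fderiv ℝ (fun x => midpointLd L a x t) b
        = t • (((1 : ℝ) / 2) •
              fderiv ℝ (fun x => L (x, t⁻¹ • (b - a))) (((1 : ℝ) / 2) • (a + b))
            + t⁻¹ • fderiv ℝ (fun w => L (((1 : ℝ) / 2) • (a + b), w)) (t⁻¹ • (b - a))) ∧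
      fderiv ℝ (fun x => midpointLd L x b t) a
        = t • (((1 : ℝ) / 2) •
              fderiv ℝ (fun x => L (x, t⁻¹ • (b - a))) (((1 : ℝ) / 2) • (a + b))
            - t⁻¹ • fderiv ℝ (fun w => L (((1 : ℝ) / 2) • (a + b), w)) (t⁻¹ • (b - a))) := by
  obtain ⟨p1, p2⟩ := aux_partials L hL (((1 : ℝ) / 2) • (a + b)) (t⁻¹ • (b - a))
  rw [p1, p2]
  have hd := ((hL.differentiable (by norm_num))
    (((1 : ℝ) / 2) • (a + b), t⁻¹ • (b - a))).hasFDerivAt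
  have split : ∀ (A : E × E →L[ℝ] ℝ) (x y : E), A (x, y) = A (x, 0) + A (0, y) := by
    intro A x y
    rw [← map_add]; simp
  constructor
  · have e1 := (((hasFDerivAt_id (𝕜 := ℝ) b).const_add a).const_smul ((1 : ℝ) / 2)).prodMk
      (((hasFDerivAt_id (𝕜 := ℝ) b).sub_const a).const_smul t⁻¹)
    have e2 := (HasFDerivAt.comp b (g := L) hd e1).const_smul t
    refine (HasFDerivAt.fderiv (f := fun x => midpointLd L a x t) e2).trans ?_
    ext u
    have k1 := map_smul (fderiv ℝ L (((1 : ℝ) / 2) • (a + b), t⁻¹ • (b - a))) ((1 : ℝ) / 2) (u, 0)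
    have k2 := map_smul (fderiv ℝ L (((1 : ℝ) / 2) • (a + b), t⁻¹ • (b - a))) t⁻¹ (0, u)
    simp only [Prod.smul_mk, smul_zero, smul_eq_mul] at k1 k2
    simp only [ContinuousLinearMap.smul_apply, ContinuousLinearMap.add_apply,
      ContinuousLinearMap.comp_apply, ContinuousLinearMap.prod_apply,
      ContinuousLinearMap.inl_apply, ContinuousLinearMap.inr_apply,
      ContinuousLinearMap.id_apply, smul_eq_mul]
    rw [split, k1, k2]
  · have e1 := (((hasFDerivAt_id (𝕜 := ℝ) a).add_const b).const_smul ((1 : ℝ) / 2)).prodMk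
      (((hasFDerivAt_id (𝕜 := ℝ) a).const_sub b).const_smul t⁻¹)
    have e2 := (HasFDerivAt.comp a (g := L) hd e1).const_smul t
    refine (HasFDerivAt.fderiv (f := fun x => midpointLd L x b t) e2).trans ?_
    ext u
    have k1 := map_smul (fderiv ℝ L (((1 : ℝ) / 2) • (a + b), t⁻¹ • (b - a))) ((1 : ℝ) / 2) (u, 0)
    have k2 := map_smul (fderiv ℝ L (((1 : ℝ) / 2) • (a + b), t⁻¹ • (b - a))) (-t⁻¹) (0, u)
    simp only [Prod.smul_mk, smul_zero, smul_eq_mul, neg_smul, Prod.neg_mk, neg_zero] at k1 k2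
    simp only [ContinuousLinearMap.smul_apply, ContinuousLinearMap.sub_apply,
      ContinuousLinearMap.comp_apply, ContinuousLinearMap.prod_apply,
      ContinuousLinearMap.inl_apply, ContinuousLinearMap.inr_apply,
      ContinuousLinearMap.neg_apply, smul_neg,
      ContinuousLinearMap.id_apply, smul_eq_mul]
    rw [split, k1, k2]
    ring

/-- For the symplectic-energy-momentum integrator with midpoint discrete Lagrangian, the
variational (KKT) equations imply, after eliminating the multipliers, conservation of the
discrete energy and the discrete Euler–Lagrange equations. -/
theorem sem_integrator_energy_and_del
    {E : Type*} [NormedAddCommGroup E] [NormedSpace ℝ E]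
    (L : E × E → ℝ) (hL : ContDiff ℝ 1 L)
    (N : ℕ) (hN : 3 ≤ N)
    (q : ℕ → E) (h : ℕ → ℝ) (hh : ∀ i, i < N → 0 < h i)
    (lam : ℕ → E →L[ℝ] ℝ) (om : ℕ → ℝ)
    (h₁ : ∀ i, i + 2 ≤ N →
      0 = L (midpt q i, discVel q h i)
          - (fderiv ℝ (fun w => L (midpt q i, w)) (discVel q h i)) (discVel q h i)
          - om i)
    (h₂ : ∀ i, 1 ≤ i → i + 1 ≤ N →
      0 = -L (midpt q i, discVel q h i)
          + (fderiv ℝ (fun w => L (midpt q i, w)) (discVel q h i)) (discVel q h i)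
          + om (i - 1))
    (h₃ : ∀ i, i + 2 ≤ N →
      0 = h i • (((1 : ℝ) / 2) • fderiv ℝ (fun x => L (x, discVel q h i)) (midpt q i)
            + (h i)⁻¹ • fderiv ℝ (fun w => L (midpt q i, w)) (discVel q h i))
          - lam i)
    (h₄ : ∀ i, 1 ≤ i → i + 1 ≤ N →
      0 = h i • (((1 : ℝ) / 2) • fderiv ℝ (fun x => L (x, discVel q h i)) (midpt q i)
            - (h i)⁻¹ • fderiv ℝ (fun w => L (midpt q i, w)) (discVel q h i))
          + lam (i - 1)) :
    ∀ i, i + 2 ≤ N →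
      discEnergy L q h i = discEnergy L q h (i + 1) ∧
      fderiv ℝ (fun x => midpointLd L (q i) x (h i)) (q (i + 1))
        + fderiv ℝ (fun x => midpointLd L x (q (i + 2)) (h (i + 1))) (q (i + 1)) = 0 := by
  intro i hi
  have a1 := h₁ i hi
  have a2 := h₂ (i + 1) (by omega) (by omega)
  have a3 := h₃ i hi
  have a4 := h₄ (i + 1) (by omega) (by omega)
  rw [Nat.add_sub_cancel] at a2 a4
  refine ⟨?_, ?_⟩
  · unfold discEnergy
    linarith
  · rw [(aux_Ld L hL (q i) (q (i + 1)) (h i)).1,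
      (aux_Ld L hL (q (i + 1)) (q (i + 2)) (h (i + 1))).2]
    have b3 := sub_eq_zero.1 a3.symm
    have b4 := eq_neg_of_add_eq_zero_left a4.symm
    simp only [midpt, discVel] at b3 b4
    rw [b3]
    exact (congrArg (lam i + ·) b4).trans (add_neg_cancel _)
end

section
/- Let ħ > 0 and m > 0 be real constants, let Ω ⊆ ℝ³ be open, let I ⊆ ℝ be an open interval, let V : ℝ³ → ℝ be continuous, and let ψ : ℝ × ℝ³ → ℂ be twice continuously differentiable on I × Ω. Suppose that the first variation of the Schrödinger action with respect to the conjugate field vanishes for all compactly supported variations: for every smooth η : ℝ × ℝ³ → ℂ with compact support contained in I × Ω, ∫∫ [ (iħ/2)·( ∂ₜψ(t,x)·conj(η(t,x)) − ψ(t,x)·∂ₜ(conj η)(t,x) ) − (ħ²/(2m))·∑_{k=1}^{3} ∂ₖψ(t,x)·∂ₖ(conj η)(t,x) − V(x)·ψ(t,x)·conj(η(t,x)) ] dx dt = 0, where ∂ₖ denotes the partial derivative in the k-th spatial coordinate. Then ψ satisfies the linear Schrödinger equation on I × Ω: iħ·∂ₜψ(t,x) = −(ħ²/(2m))·∑_{k=1}^{3}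 ∂ₖ∂ₖψ(t,x) + V(x)·ψ(t,x). -/
open MeasureTheory

/-- The time partial derivative `∂ₜψ`. -/
noncomputable def timeDeriv (ψ : ℝ × (Fin 3 → ℝ) → ℂ) (p : ℝ × (Fin 3 → ℝ)) : ℂ :=
  deriv (fun s => ψ (s, p.2)) p.1

/-- The `k`-th spatial partial derivative `∂ₖψ`. -/
noncomputable def spaceDeriv (k : Fin 3) (ψ : ℝ × (Fin 3 → ℝ) → ℂ)
    (p : ℝ × (Fin 3 → ℝ)) : ℂ :=
  deriv (fun u => ψ (p.1, Function.update p.2 k u)) (p.2 k)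


lemma td_eq {f : ℝ × (Fin 3 → ℝ) → ℂ} {p : ℝ × (Fin 3 → ℝ)} (h : DifferentiableAt ℝ f p) :
    timeDeriv f p = fderiv ℝ f p ((1 : ℝ), (0 : Fin 3 → ℝ)) := by
  unfold timeDeriv
  have h1 : HasDerivAt (fun s : ℝ => (s, p.2)) ((1 : ℝ), (0 : Fin 3 → ℝ)) p.1 :=
    (hasDerivAt_id p.1).prodMk (hasDerivAt_const p.1 p.2)
  have h2 : HasFDerivAt f (fderiv ℝ f p) ((fun s : ℝ => (s, p.2)) p.1) := h.hasFDerivAt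
  exact (h2.comp_hasDerivAt p.1 h1).deriv

lemma sd_eq (k : Fin 3) {f : ℝ × (Fin 3 → ℝ) → ℂ} {p : ℝ × (Fin 3 → ℝ)}
    (h : DifferentiableAt ℝ f p) :
    spaceDeriv k f p = fderiv ℝ f p ((0 : ℝ), (Pi.single k 1 : Fin 3 → ℝ)) := by
  unfold spaceDeriv
  have h1 : HasDerivAt (fun u : ℝ => (p.1, Function.update p.2 k u))
      ((0 : ℝ), (Pi.single k 1 : Fin 3 → ℝ)) (p.2 k) :=
    (hasDerivAt_const (p.2 k) p.1).prodMk (hasDerivAt_update p.2 k (p.2 k))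
  have h2 : HasFDerivAt f (fderiv ℝ f p)
      ((fun u : ℝ => (p.1, Function.update p.2 k u)) (p.2 k)) := by
    simpa using h.hasFDerivAt
  exact (h2.comp_hasDerivAt (p.2 k) h1).deriv

lemma int_aux {U : Set (ℝ × (Fin 3 → ℝ))} (hU : IsOpen U) {F G : ℝ × (Fin 3 → ℝ) → ℂ}
    (hF : ContinuousOn F U) (hG : Continuous G) (hc : HasCompactSupport G)
    (hs : tsupport G ⊆ U) : Integrable (fun p => F p * G p) := by
  have hc2 : HasCompactSupport (fun p => F p * G p) := hc.mul_left (f := F)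
  refine Continuous.integrable_of_hasCompactSupport ?_ hc2
  refine continuous_of_tsupport fun x hx => ?_
  have hx' : x ∈ U := hs (closure_mono (Function.support_mul_subset_right F G) hx)
  exact (hF.continuousAt (hU.mem_nhds hx')).mul hG.continuousAt

lemma ibp_aux {U : Set (ℝ × (Fin 3 → ℝ))} (hU : IsOpen U) {F G : ℝ × (Fin 3 → ℝ) → ℂ}
    (hF : ContDiffOn ℝ 1 F U) (hG : ContDiff ℝ (⊤ : ℕ∞) G) (hc : HasCompactSupport G)
    (hs : tsupport G ⊆ U) (v : ℝ × (Fin 3 → ℝ)) :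
    Integrable (fun p => F p * fderiv ℝ G p v + fderiv ℝ F p v * G p) ∧
    ∫ p, (F p * fderiv ℝ G p v + fderiv ℝ F p v * G p) = 0 := by
  have hG' : Continuous (fun p => fderiv ℝ G p v) :=
    (hG.continuous_fderiv (by simp)).clm_apply continuous_const
  have hF' : ContinuousOn (fun p => fderiv ℝ F p v) U :=
    (hF.continuousOn_fderiv_of_isOpen hU le_rfl).clm_apply continuousOn_const
  have hc' : HasCompactSupport (fun p => fderiv ℝ G p v) := hc.fderiv_apply ℝ v
  have hs' : tsupport (fun p => fderiv ℝ G p v) ⊆ U := (tsupport_fderiv_apply_subset ℝ v).trans hs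
  have i1 := int_aux hU hF.continuousOn hG' hc' hs'
  have i2 := int_aux hU hF' hG.continuous hc hs
  have i3 := int_aux hU hF.continuousOn hG.continuous hc hs
  refine ⟨i1.add i2, ?_⟩
  haveI : (volume : Measure (ℝ × (Fin 3 → ℝ))).IsAddHaarMeasure := by
    rw [Measure.volume_eq_prod]
    infer_instance
  rw [integral_add i1 i2, integral_mul_fderiv_eq_neg_fderiv_mul_of_integrable i2 i1 i3]
  · simp
  · intro x hx
    exact (hF.differentiableOn (by simp)).differentiableAt (hU.mem_nhds (hs hx))
  · intro x _
    exact (hG.differentiable (by simp)).differentiableAt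

/-- Variational derivation of the linear Schrödinger equation: if the first variation of
the Schrödinger action with respect to the conjugate field vanishes for all smooth
compactly supported variations `η` with support in `I ×ˢ Ω`, then `ψ` satisfies
`ihbar·∂ₜψ = −(hbar²/(2m))·∇²ψ + V·ψ` on `I ×ˢ Ω`. -/
theorem schrodinger_from_variational_principle
    (hbar m : ℝ) (hhbar : 0 < hbar) (hm : 0 < m)
    (Ω : Set (Fin 3 → ℝ)) (hΩ : IsOpen Ω)
    (I : Set ℝ) (hI : ∃ a b : ℝ, I = Set.Ioo a b)
    (V : (Fin 3 → ℝ) → ℝ) (hV : Continuous V)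
    (ψ : ℝ × (Fin 3 → ℝ) → ℂ) (hψ : ContDiffOn ℝ 2 ψ (I ×ˢ Ω))
    (hvar : ∀ η : ℝ × (Fin 3 → ℝ) → ℂ, ContDiff ℝ (⊤ : ℕ∞) η → HasCompactSupport η →
      tsupport η ⊆ I ×ˢ Ω →
      (∫ p : ℝ × (Fin 3 → ℝ),
        ((Complex.I * (hbar : ℂ)) / 2) *
            (timeDeriv ψ p * (starRingEnd ℂ) (η p)
              - ψ p * timeDeriv (fun q => (starRingEnd ℂ) (η q)) p)
          - ((hbar : ℂ) ^ 2 / (2 * (m : ℂ))) *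
              ∑ k : Fin 3,
                spaceDeriv k ψ p * spaceDeriv k (fun q => (starRingEnd ℂ) (η q)) p
          - (V p.2 : ℂ) * ψ p * (starRingEnd ℂ) (η p)) = 0) :
    ∀ p ∈ I ×ˢ Ω,
      Complex.I * (hbar : ℂ) * timeDeriv ψ p
        = -((hbar : ℂ) ^ 2 / (2 * (m : ℂ))) *
            (∑ k : Fin 3, spaceDeriv k (spaceDeriv k ψ) p) + (V p.2 : ℂ) * ψ p := by
  obtain ⟨a, b, rfl⟩ := hI
  have hU : IsOpen (Set.Ioo a b ×ˢ Ω) := isOpen_Ioo.prod hΩ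
  set U := Set.Ioo a b ×ˢ Ω with hUdef
  let e : Fin 3 → ℝ × (Fin 3 → ℝ) := fun k => ((0 : ℝ), (Pi.single k 1 : Fin 3 → ℝ))
  let e0 : ℝ × (Fin 3 → ℝ) := ((1 : ℝ), (0 : Fin 3 → ℝ))
  let A : Fin 3 → ℝ × (Fin 3 → ℝ) → ℂ := fun k q => fderiv ℝ ψ q (e k)
  have hψ1 : ContDiffOn ℝ 1 ψ U := hψ.of_le (by norm_num)
  have hA : ∀ k, ContDiffOn ℝ 1 (A k) U := fun k =>
    (hψ.fderiv_of_isOpen hU (by norm_num)).clm_apply contDiffOn_const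
  have hdψ : ∀ p ∈ U, DifferentiableAt ℝ ψ p := fun p hp =>
    (hψ1.differentiableOn (by simp)).differentiableAt (hU.mem_nhds hp)
  have hsA : ∀ k, ∀ p ∈ U, spaceDeriv k ψ p = A k p := fun k p hp => sd_eq k (hdψ p hp)
  have hssA : ∀ k, ∀ p ∈ U, spaceDeriv k (spaceDeriv k ψ) p = fderiv ℝ (A k) p (e k) := by
    intro k p hp
    have hev : spaceDeriv k ψ =ᶠ[nhds p] A k :=
      Filter.eventuallyEq_of_mem (hU.mem_nhds hp) (hsA k)
    have hd : DifferentiableAt ℝ (A k) p :=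
      ((hA k).differentiableOn (by simp)).differentiableAt (hU.mem_nhds hp)
    rw [sd_eq k (hd.congr_of_eventuallyEq hev), hev.fderiv_eq]
  let c : ℂ := (hbar : ℂ) ^ 2 / (2 * (m : ℂ))
  let R : ℝ × (Fin 3 → ℝ) → ℂ := fun p => Complex.I * (hbar : ℂ) * fderiv ℝ ψ p e0
    + c * (∑ k : Fin 3, fderiv ℝ (A k) p (e k)) - (V p.2 : ℂ) * ψ p
  have hR : ContinuousOn R U := by
    have c1 : ContinuousOn (fun p => fderiv ℝ ψ p e0) U :=
      (hψ1.continuousOn_fderiv_of_isOpen hU le_rfl).clm_apply continuousOn_const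
    have c2 : ∀ k, ContinuousOn (fun p => fderiv ℝ (A k) p (e k)) U := fun k =>
      ((hA k).continuousOn_fderiv_of_isOpen hU le_rfl).clm_apply continuousOn_const
    have c3 : Continuous (fun p : ℝ × (Fin 3 → ℝ) => (V p.2 : ℂ)) :=
      Complex.continuous_ofReal.comp (hV.comp continuous_snd)
    exact ((continuousOn_const.mul c1).add
      (continuousOn_const.mul (continuousOn_finsetSum _ fun k _ => c2 k))).sub
      (c3.continuousOn.mul hψ1.continuousOn)
  have key : ∀ᵐ p, p ∈ U → R p = 0 := by
    refine hU.ae_eq_zero_of_integral_contDiff_smul_eq_zero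
      (hR.locallyIntegrableOn hU.measurableSet) ?_
    intro g hg hgc hgs
    let η : ℝ × (Fin 3 → ℝ) → ℂ := fun p => (g p : ℂ)
    have hη : ContDiff ℝ (⊤ : ℕ∞) η := Complex.ofRealCLM.contDiff.comp hg
    have hηc : HasCompactSupport η := hgc.comp_left (g := fun x : ℝ => (x : ℂ)) (by simp)
    have hηs : tsupport η ⊆ U :=
      (closure_mono (Function.support_comp_subset
        (show (fun x : ℝ => (x : ℂ)) 0 = 0 by simp) g)).trans hgs
    have hηd : ∀ p, DifferentiableAt ℝ η p := fun p =>
      (hη.differentiable (by simp)).differentiableAt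
    have hv := hvar η hη hηc hηs
    have hconj : (fun q => (starRingEnd ℂ) (η q)) = η := by
      funext q
      exact Complex.conj_ofReal _
    have hconj' : ∀ q, (starRingEnd ℂ) (η q) = η q := fun q => Complex.conj_ofReal _
    rw [hconj] at hv
    simp only [hconj'] at hv
    obtain ⟨j0, z0⟩ := ibp_aux hU hψ1 hη hηc hηs e0
    have hk := fun k => ibp_aux hU (hA k) hη hηc hηs (e k)
    have iR := int_aux hU hR hη.continuous hηc hηs
    have iS : Integrable (fun p => ∑ k : Fin 3,
        (A k p * fderiv ℝ η p (e k) + fderiv ℝ (A k) p (e k) * η p)) :=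
      integrable_finsetSum _ fun k _ => (hk k).1
    have zS : ∫ p, (∑ k : Fin 3,
        (A k p * fderiv ℝ η p (e k) + fderiv ℝ (A k) p (e k) * η p)) = 0 := by
      rw [integral_finsetSum _ fun k _ => (hk k).1]
      exact Finset.sum_eq_zero fun k _ => (hk k).2
    have hfin : ∀ p, ((Complex.I * (hbar : ℂ)) / 2) *
            (timeDeriv ψ p * η p - ψ p * timeDeriv η p)
          - ((hbar : ℂ) ^ 2 / (2 * (m : ℂ))) * ∑ k : Fin 3, spaceDeriv k ψ p * spaceDeriv k η p
          - (V p.2 : ℂ) * ψ p * η p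
        = R p * η p - ((Complex.I * (hbar : ℂ)) / 2) *
            (ψ p * fderiv ℝ η p e0 + fderiv ℝ ψ p e0 * η p)
          - c * (∑ k : Fin 3,
            (A k p * fderiv ℝ η p (e k) + fderiv ℝ (A k) p (e k) * η p)) := by
      intro p
      rw [td_eq (hηd p)]
      simp only [fun k => sd_eq k (hηd p)]
      by_cases hp : p ∈ U
      · rw [td_eq (hdψ p hp)]
        simp only [fun k => hsA k p hp, Fin.sum_univ_three, R, c, e0, e]
        ring
      · have hp' : p ∉ tsupport η := fun h => hp (hηs h)
        have h0 : η p = 0 := image_eq_zero_of_notMem_tsupport hp'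
        have h1 : fderiv ℝ η p = 0 :=
          image_eq_zero_of_notMem_tsupport fun h => hp' (tsupport_fderiv_subset ℝ h)
        simp [h0, h1]
    simp only [hfin] at hv
    have iT : Integrable (fun p => R p * η p - ((Complex.I * (hbar : ℂ)) / 2) *
            (ψ p * fderiv ℝ η p e0 + fderiv ℝ ψ p e0 * η p)) := iR.sub (j0.const_mul _)
    rw [integral_sub iT (iS.const_mul _),
      integral_sub iR (j0.const_mul _), integral_const_mul, integral_const_mul, z0, zS] at hv
    simp only [mul_zero, sub_zero] at hv
    rw [← hv]
    refine integral_congr_ae (Filter.Eventually.of_forall fun p => ?_)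
    simp [η, mul_comm]
  have hz : Set.EqOn R (fun _ => 0) U := by
    refine Measure.eqOn_open_of_ae_eq (μ := volume) ?_ hU hR continuousOn_const
    exact (ae_restrict_iff' hU.measurableSet).2 key
  intro p hp
  have h := hz hp
  simp only [R, c] at h
  rw [td_eq (hdψ p hp)]
  simp only [fun k => hssA k p hp]
  linear_combination h
end

section
/- Let A be a real Banach algebra with unit, let ℓ : A → ℝ be Fréchet differentiable, let N ≥ 2, let g₀,…,g_N be invertible elements of A, and set f_k = g_k⁻¹·g_{k+1} for k = 0,…,N−1. Then the following are equivalent: (1) for every choice of variations ϑ₀,…,ϑ_N ∈ A with ϑ₀ = ϑ_N = 0, the first variation of the discrete action sum vanishes: ∑_{k=0}^{N−1} Dℓ(f_k)[ −ϑ_k·f_k + f_k·ϑ_{k+1} ] = 0; (2) the discrete Euler–Poincaré equations hold: for each k = 1,…,N−1 and every ϑ ∈ A, Dℓ(f_{k−1})[ f_{k−1}·ϑ ] = Dℓ(f_k)[ ϑ·f_k ]. Here Dℓ(f) denotes the Fréchet derivative of ℓ at f, a continuous linear functional on A. -/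
/-- Discrete Euler–Poincaré equations: for a Fréchet differentiable reduced discrete
Lagrangian `ℓ` on a real Banach algebra `A`, with `f_k = g_k⁻¹·g_{k+1}`, the first
variation of the discrete action sum `∑_{k<N} ℓ(f_k)` vanishes for all variations
`ϑ₀, …, ϑ_N` with `ϑ₀ = ϑ_N = 0` (where `δf_k = −ϑ_k·f_k + f_k·ϑ_{k+1}`) if and only if
the discrete Euler–Poincaré equations
`Dℓ(f_{k−1})[f_{k−1}·ϑ] = Dℓ(f_k)[ϑ·f_k]` hold for `k = 1, …, N−1` and all `ϑ`. -/
theorem discrete_euler_poincare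
    {A : Type*} [NormedRing A] [NormedAlgebra ℝ A]
    (ℓ : A → ℝ) (hℓ : Differentiable ℝ ℓ)
    (N : ℕ) (hN : 2 ≤ N)
    (g : ℕ → A) (hg : ∀ k, k ≤ N → IsUnit (g k)) :
    let f : ℕ → A := fun k => Ring.inverse (g k) * g (k + 1)
    ((∀ ϑ : ℕ → A, ϑ 0 = 0 → ϑ N = 0 →
        ∑ k ∈ Finset.range N, fderiv ℝ ℓ (f k) (-(ϑ k * f k) + f k * ϑ (k + 1)) = 0) ↔
      (∀ k, 1 ≤ k → k ≤ N - 1 → ∀ ϑ : A,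
        fderiv ℝ ℓ (f (k - 1)) (f (k - 1) * ϑ) = fderiv ℝ ℓ (f k) (ϑ * f k))) := by
  intro f
  obtain ⟨M, rfl⟩ : ∃ M, N = M + 1 := ⟨N - 1, by omega⟩
  have key : ∀ ϑ : ℕ → A, ϑ 0 = 0 → ϑ (M + 1) = 0 →
      ∑ k ∈ Finset.range (M + 1), fderiv ℝ ℓ (f k) (-(ϑ k * f k) + f k * ϑ (k + 1)) =
      ∑ k ∈ Finset.range M, (fderiv ℝ ℓ (f k) (f k * ϑ (k + 1)) -
        fderiv ℝ ℓ (f (k + 1)) (ϑ (k + 1) * f (k + 1))) := by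
    intro ϑ h0 hN'
    simp only [map_add, map_neg, Finset.sum_add_distrib, Finset.sum_neg_distrib,
      Finset.sum_sub_distrib]
    rw [Finset.sum_range_succ' (fun k => fderiv ℝ ℓ (f k) (ϑ k * f k)),
      Finset.sum_range_succ (fun k => fderiv ℝ ℓ (f k) (f k * ϑ (k + 1)))]
    simp only [h0, hN', zero_mul, mul_zero, map_zero]
    ring
  constructor
  · intro h k hk1 hk2 θ
    obtain ⟨j, rfl⟩ : ∃ j, k = j + 1 := ⟨k - 1, by omega⟩
    have h0 : (Pi.single (j + 1) θ : ℕ → A) 0 = 0 := Pi.single_eq_of_ne (by omega) _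
    have h1 : (Pi.single (j + 1) θ : ℕ → A) (M + 1) = 0 := Pi.single_eq_of_ne (by omega) _
    have hs := h _ h0 h1
    rw [key _ h0 h1, Finset.sum_eq_single j] at hs
    · rw [Pi.single_eq_same] at hs
      exact sub_eq_zero.mp hs
    · intro b _ hb
      rw [Pi.single_eq_of_ne (by omega)]
      simp only [zero_mul, mul_zero, map_zero, sub_zero]
    · intro hj
      exact absurd (Finset.mem_range.mpr (by omega)) hj
  · intro h ϑ h0 h1
    rw [key ϑ h0 h1]
    refine Finset.sum_eq_zero fun k hk => ?_
    have hk' := Finset.mem_range.mp hk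
    exact sub_eq_zero.mpr (h (k + 1) (by omega) (by omega) (ϑ (k + 1)))
end
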